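/- Let p be a prime, d > 1, and set q = p^d and K = Φ_d(p) (a positive integer). Then for all a, t ≥ 1, the generalized Paley graph Γ(K·(q^{ta}−1)/(q^t−1), q^{at}) over the field GaloisField p (d·a·t) with q^{at} = p^{dat} elements has integral spectrum: Spec(Γ(K·(q^{ta}−1)/(q^t−1), q^{at})) ⊆ ℤ. -/

import Mathlib

open scoped Classical

noncomputable instance (p n : ℕ) [Fact p.Prime] : Fintype (GaloisField p n) :=
  Fintype.ofFinite _

/-!
The additive characters of a finite abelian group `G` diagonalize every Cayley matrix on `G`, so the
eigenvalues of `Γ(k, q)` are the sums `∑ s ∈ R_k, ψ s`, which are algebraic integers. If `R_k` is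
stable under multiplication by `𝔽_pˣ`, averaging over these scalars gives
`(p - 1) * ∑ s ∈ R_k, ψ s = ∑ s ∈ R_k, (∑ c : 𝔽_p, ψ (c * s) - 1) ∈ ℤ`, because each inner character
sum is `0` or `p`; so the eigenvalues are also rational, hence integers. Stability of `R_k` means
that `𝔽_pˣ` consists of `k`-th powers, which holds when `k * (p - 1) ∣ q - 1`. For the given family
this divisibility comes from `Φ_d(p) ∣ 1 + p + ⋯ + p ^ (d - 1) = (p ^ d - 1) / (p - 1)`.
-/

section Spectrum

theorem spectrum_eq_range_of_apply_basis {K V ι : Type*} [Field K] [AddCommGroup V] [Module K V]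
    [Finite ι] (b : Module.Basis ι K V) {f : Module.End K V} {eig : ι → K}
    (hf : ∀ i, f (b i) = eig i • b i) : spectrum K f = Set.range eig := by
  have := Fintype.ofFinite ι
  have := Module.Finite.of_basis b
  have f_eq_diagonal : f = Matrix.toLin b b (Matrix.diagonal eig) :=
    b.ext fun i => by
      rw [hf, (hasEigenvector_toLin_diagonal eig i b).apply_eq_smul]
  ext μ
  rw [← Module.End.hasEigenvalue_iff_mem_spectrum, f_eq_diagonal,
    hasEigenvalue_toLin_diagonal_iff, Set.mem_range]

variable {G : Type*} [AddCommGroup G]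

/-- The adjacency matrix of the Cayley digraph on `G` with connection set `S`, in which there is an
arc from `x` to `y` iff `y - x ∈ S`. -/
def cayleyMatrix [DecidableEq G] (S : Finset G) : Matrix G G ℂ :=
  Matrix.of fun x y => if y - x ∈ S then 1 else 0

theorem cayleyMatrix_eq_circulant [DecidableEq G] (S : Finset G) :
    cayleyMatrix S = Matrix.circulant fun x => if -x ∈ S then 1 else 0 := by
  ext x y
  simp [cayleyMatrix]

variable [Fintype G]

theorem circulant_mulVec_addChar {R : Type*} [CommSemiring R] (w : G → R) (ψ : AddChar G R) :
    (Matrix.circulant w).mulVec ψ = (∑ x, w x * ψ (-x)) • ⇑ψ := by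
  ext x
  calc ∑ y, w (x - y) * ψ y
      = ∑ y, w y * ψ (x - y) := by
        rw [← (Equiv.subLeft x).sum_comp]
        simp only [Equiv.subLeft_apply, sub_sub_cancel]
    _ = (∑ y, w y * ψ (-y)) * ψ x := by
        rw [Finset.sum_mul]
        refine Finset.sum_congr rfl fun y _ => ?_
        rw [sub_eq_neg_add, AddChar.map_add_eq_mul, mul_assoc]

variable [DecidableEq G]

theorem spectrum_circulant (w : G → ℂ) :
    spectrum ℂ (Matrix.circulant w) = Set.range fun ψ : AddChar G ℂ => ∑ x, w x * ψ (-x) := by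
  rw [← Matrix.spectrum_toLin']
  refine spectrum_eq_range_of_apply_basis (AddChar.complexBasis G) fun ψ => ?_
  rw [AddChar.complexBasis_apply, Matrix.toLin'_apply, circulant_mulVec_addChar]

theorem spectrum_cayleyMatrix (S : Finset G) :
    spectrum ℂ (cayleyMatrix S) = Set.range fun ψ : AddChar G ℂ => ∑ s ∈ S, ψ s := by
  rw [cayleyMatrix_eq_circulant, spectrum_circulant]
  congr! 2 with ψ
  calc ∑ x, (if -x ∈ S then 1 else 0) * ψ (-x)
      = ∑ x, (if x ∈ S then 1 else 0) * ψ x :=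
        Fintype.sum_equiv (Equiv.neg G) _ _ fun _ => rfl
    _ = ∑ s ∈ S, ψ s := by simp

end Spectrum

section CharacterSums

theorem mem_range_intCast_of_isIntegral_of_mul_eq {L : Type*} [Field L] [CharZero L] {x : L}
    (hx : IsIntegral ℤ x) {n m : ℤ} (hn : n ≠ 0) (hnx : n * x = m) :
    x ∈ Set.range ((↑) : ℤ → L) := by
  have hn' : (n : L) ≠ 0 := Int.cast_ne_zero.mpr hn
  have x_eq_ratCast : x = algebraMap ℚ L (m / n) := by
    rw [map_div₀, map_intCast, map_intCast, eq_div_iff hn', mul_comm, hnx]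
  rw [x_eq_ratCast, isIntegral_algebraMap_iff (algebraMap ℚ L).injective,
    IsIntegrallyClosed.isIntegral_iff] at hx
  obtain ⟨z, hz⟩ := hx
  exact ⟨z, by rw [x_eq_ratCast, ← hz, eq_intCast, map_intCast]⟩

theorem isIntegral_addChar_apply {A R : Type*} [AddMonoid A] [CommRing R] (ψ : AddChar A R)
    {a : A} (ha : IsOfFinAddOrder a) : IsIntegral ℤ (ψ a) := by
  refine IsIntegral.of_pow ha.addOrderOf_pos ?_
  rw [← AddChar.map_nsmul_eq_pow, addOrderOf_nsmul_eq_zero, AddChar.map_zero_eq_one]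
  exact isIntegral_one

theorem sum_addChar_mem_range_intCast {A R : Type*} [AddGroup A] [Fintype A] [CommRing R]
    [IsDomain R] (ψ : AddChar A R) : ∑ a, ψ a ∈ Set.range ((↑) : ℤ → R) := by
  rw [AddChar.sum_eq_ite]
  split_ifs
  · exact ⟨Fintype.card A, Int.cast_natCast _⟩
  · exact ⟨0, Int.cast_zero⟩

theorem sum_addChar_smul_mem_range_intCast {K V R : Type*} [Ring K] [Fintype K] [AddCommGroup V]
    [Module K V] [CommRing R] [IsDomain R] (ψ : AddChar V R) (v : V) :
    ∑ c : K, ψ (c • v) ∈ Set.range ((↑) : ℤ → R) :=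
  sum_addChar_mem_range_intCast (ψ.compAddMonoidHom ((smulAddHom K V).flip v))

variable {K V : Type*} [Field K] [AddCommGroup V] [Module K V] {S : Finset V}

theorem sum_smul_eq_sum {M : Type*} [AddCommMonoid M]
    (hS : ∀ c : K, c ≠ 0 → ∀ s ∈ S, c • s ∈ S) (f : V → M) {c : K} (hc : c ≠ 0) :
    ∑ s ∈ S, f (c • s) = ∑ s ∈ S, f s :=
  Finset.sum_nbij' (c • ·) (c⁻¹ • ·) (hS c hc) (hS c⁻¹ (inv_ne_zero hc))
    (fun s _ => inv_smul_smul₀ hc s) (fun s _ => smul_inv_smul₀ hc s) (fun _ _ => rfl)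

variable (K) in
theorem isOfFinAddOrder_of_finite_scalars [Finite K] (v : V) : IsOfFinAddOrder v := by
  have := Fintype.ofFinite K
  refine isOfFinAddOrder_iff_nsmul_eq_zero.mpr ⟨Fintype.card K, Fintype.card_pos, ?_⟩
  rw [← Nat.cast_smul_eq_nsmul K, FiniteField.cast_card_eq_zero, zero_smul]

theorem card_sub_one_mul_sum_addChar [Fintype K] {R : Type*} [CommRing R]
    (hS : ∀ c : K, c ≠ 0 → ∀ s ∈ S, c • s ∈ S) (ψ : AddChar V R) :
    ((Fintype.card K : R) - 1) * ∑ s ∈ S, ψ s = ∑ s ∈ S, (∑ c : K, ψ (c • s) - 1) := by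
  calc ((Fintype.card K : R) - 1) * ∑ s ∈ S, ψ s
      = ∑ _c ∈ Finset.univ.erase (0 : K), ∑ s ∈ S, ψ s := by
        rw [Finset.sum_const, Finset.card_erase_of_mem (Finset.mem_univ _), Finset.card_univ,
          nsmul_eq_mul, Nat.cast_sub Fintype.card_pos, Nat.cast_one]
    _ = ∑ c ∈ Finset.univ.erase (0 : K), ∑ s ∈ S, ψ (c • s) :=
        Finset.sum_congr rfl fun c hc => (sum_smul_eq_sum hS ψ (Finset.ne_of_mem_erase hc)).symm
    _ = ∑ s ∈ S, ∑ c ∈ Finset.univ.erase (0 : K), ψ (c • s) := Finset.sum_comm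
    _ = ∑ s ∈ S, (∑ c : K, ψ (c • s) - 1) := by
        refine Finset.sum_congr rfl fun s _ => ?_
        rw [Finset.sum_erase_eq_sub (Finset.mem_univ _), zero_smul, AddChar.map_zero_eq_one]

theorem sum_addChar_mem_range_intCast_of_smul_mem [Finite K] {L : Type*} [Field L] [CharZero L]
    (hS : ∀ c : K, c ≠ 0 → ∀ s ∈ S, c • s ∈ S) (ψ : AddChar V L) :
    ∑ s ∈ S, ψ s ∈ Set.range ((↑) : ℤ → L) := by
  have := Fintype.ofFinite K
  have sum_isIntegral : IsIntegral ℤ (∑ s ∈ S, ψ s) := IsIntegral.sum _ fun s _ =>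
    isIntegral_addChar_apply ψ (isOfFinAddOrder_of_finite_scalars K s)
  choose lineSum h_lineSum using sum_addChar_smul_mem_range_intCast (K := K) ψ
  have card_sub_one_ne_zero : (Fintype.card K : ℤ) - 1 ≠ 0 := by
    have := Fintype.one_lt_card (α := K)
    lia
  refine mem_range_intCast_of_isIntegral_of_mul_eq (m := ∑ s ∈ S, (lineSum s - 1))
    sum_isIntegral card_sub_one_ne_zero ?_
  push_cast
  simp only [h_lineSum, card_sub_one_mul_sum_addChar hS]

end CharacterSums

section Powers

theorem exists_pow_eq_of_pow_eq_one {G : Type*} [Group G] [IsCyclic G] {k m : ℕ} (hm : m ≠ 0)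
    (hkm : k * m ∣ Nat.card G) {e : G} (he : e ^ m = 1) : ∃ w : G, w ^ k = e := by
  obtain ⟨g, hg⟩ := IsCyclic.exists_generator (α := G)
  obtain ⟨i, rfl⟩ := hg e
  have card_dvd : (Nat.card G : ℤ) ∣ i * m := by
    rw [← orderOf_eq_card_of_forall_mem_zpowers hg, orderOf_dvd_iff_zpow_eq_one, zpow_mul,
      zpow_natCast]
    exact he
  have k_dvd : (k : ℤ) ∣ i := by
    refine Int.dvd_of_mul_dvd_mul_right (Nat.cast_ne_zero.mpr hm) ?_
    exact_mod_cast (Int.natCast_dvd_natCast.mpr hkm).trans card_dvd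
  obtain ⟨j, rfl⟩ := k_dvd
  exact ⟨g ^ j, by rw [← zpow_natCast, ← zpow_mul, mul_comm]⟩

variable {F : Type*} [Field F] [Fintype F]

variable (F) in
/-- The set `R_k` of nonzero `k`-th powers, the connection set of `Γ(k, q)`. -/
noncomputable def nonzeroPowers (k : ℕ) : Finset F :=
  {x | ∃ z, z ≠ 0 ∧ z ^ k = x}

theorem mem_nonzeroPowers {k : ℕ} {x : F} : x ∈ nonzeroPowers F k ↔ ∃ z, z ≠ 0 ∧ z ^ k = x :=
  Finset.mem_filter_univ x

theorem mul_mem_nonzeroPowers {k : ℕ} {x y : F} (hx : x ∈ nonzeroPowers F k)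
    (hy : y ∈ nonzeroPowers F k) : x * y ∈ nonzeroPowers F k := by
  rw [mem_nonzeroPowers] at *
  obtain ⟨z, hz, rfl⟩ := hx
  obtain ⟨w, hw, rfl⟩ := hy
  exact ⟨z * w, mul_ne_zero hz hw, mul_pow z w k⟩

theorem mem_nonzeroPowers_of_pow_eq_one {k m : ℕ} (hm : m ≠ 0)
    (hkm : k * m ∣ Fintype.card F - 1) {x : F} (hx : x ^ m = 1) : x ∈ nonzeroPowers F k := by
  obtain ⟨u, rfl⟩ := IsUnit.of_pow_eq_one hx hm
  have card_units : Nat.card Fˣ = Fintype.card F - 1 := by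
    rw [Nat.card_units, Nat.card_eq_fintype_card]
  obtain ⟨w, rfl⟩ := exists_pow_eq_of_pow_eq_one (k := k) (e := u) hm (card_units ▸ hkm)
    (Units.ext (by simpa using hx))
  exact mem_nonzeroPowers.mpr ⟨w, w.ne_zero, (Units.val_pow_eq_pow_val w k).symm⟩

theorem algebraMap_mem_nonzeroPowers {K : Type*} [Field K] [Fintype K] [Algebra K F] {k : ℕ}
    (hk : k * (Fintype.card K - 1) ∣ Fintype.card F - 1) {c : K} (hc : c ≠ 0) :
    algebraMap K F c ∈ nonzeroPowers F k :=
  mem_nonzeroPowers_of_pow_eq_one (Nat.sub_ne_zero_of_lt Fintype.one_lt_card) hk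
    (by rw [← map_pow, FiniteField.pow_card_sub_one_eq_one c hc, map_one])

theorem spectrum_cayleyMatrix_nonzeroPowers_subset [DecidableEq F] (K : Type*) [Field K]
    [Fintype K] [Algebra K F] {k : ℕ} (hk : k * (Fintype.card K - 1) ∣ Fintype.card F - 1) :
    spectrum ℂ (cayleyMatrix (nonzeroPowers F k)) ⊆ Set.range ((↑) : ℤ → ℂ) := by
  rw [spectrum_cayleyMatrix]
  rintro _ ⟨ψ, rfl⟩
  refine sum_addChar_mem_range_intCast_of_smul_mem (K := K) (fun c hc s hs => ?_) ψ
  rw [Algebra.smul_def]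
  exact mul_mem_nonzeroPowers (algebraMap_mem_nonzeroPowers hk hc) hs

end Powers

section Divisibility

theorem cyclotomic_eval_mul_sub_one_dvd {R : Type*} [CommRing R] {d : ℕ} (hd : d ≠ 1) (x : R) :
    (Polynomial.cyclotomic d R).eval x * (x - 1) ∣ x ^ d - 1 := by
  have cyclotomic_dvd :=
    Polynomial.eval_dvd (x := x) (Polynomial.cyclotomic_dvd_geom_sum_of_dvd R dvd_rfl hd)
  rw [Polynomial.eval_geom_sum] at cyclotomic_dvd
  rw [← geom_sum_mul]
  exact mul_dvd_mul_right cyclotomic_dvd _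

theorem mul_pow_sub_one_div_dvd {c q : ℕ} (hc : c ∣ q - 1) (t a : ℕ) :
    c * ((q ^ (t * a) - 1) / (q ^ t - 1)) ∣ q ^ (t * a) - 1 := by
  have hqt : q ^ t - 1 ∣ q ^ (t * a) - 1 := Nat.pow_sub_one_dvd_pow_sub_one q (dvd_mul_right t a)
  calc c * ((q ^ (t * a) - 1) / (q ^ t - 1))
      ∣ (q ^ t - 1) * ((q ^ (t * a) - 1) / (q ^ t - 1)) :=
        mul_dvd_mul_right (hc.trans (Nat.sub_one_dvd_pow_sub_one q t)) _
    _ = q ^ (t * a) - 1 := Nat.mul_div_cancel' hqt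

end Divisibility

theorem gpGraph_integral_cyclotomic_family
    (p : ℕ) [Fact p.Prime] (d : ℕ) (hd : 1 < d)
    (K : ℕ) (hK : (K : ℤ) = (Polynomial.cyclotomic d ℤ).eval (p : ℤ)) :
    ∀ a t : ℕ, 1 ≤ a → 1 ≤ t →
      ∀ A : Matrix (GaloisField p (d * a * t)) (GaloisField p (d * a * t)) ℂ,
        (∀ x y, A x y =
          if ∃ z, z ≠ 0 ∧
              z ^ (K * (((p ^ d) ^ (t * a) - 1) / ((p ^ d) ^ t - 1))) = y - x
          then 1 else 0) →
        spectrum ℂ A ⊆ Set.range ((↑) : ℤ → ℂ) := by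
  intro a t ha ht A hA
  have hp : 1 ≤ p := (Fact.out : p.Prime).one_le
  have card_field : Fintype.card (GaloisField p (d * a * t)) = (p ^ d) ^ (t * a) := by
    rw [← Nat.card_eq_fintype_card, GaloisField.card p _ (by positivity), ← pow_mul]
    ring
  have K_mul_dvd : K * (p - 1) ∣ p ^ d - 1 := by
    zify [hp, Nat.one_le_pow d p hp]
    exact hK ▸ cyclotomic_eval_mul_sub_one_dvd hd.ne' (p : ℤ)
  have A_eq : A = cayleyMatrix (nonzeroPowers _
      (K * (((p ^ d) ^ (t * a) - 1) / ((p ^ d) ^ t - 1)))) := by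
    ext x y
    simp only [hA, cayleyMatrix, Matrix.of_apply, mem_nonzeroPowers]
  rw [A_eq]
  refine spectrum_cayleyMatrix_nonzeroPowers_subset (ZMod p) ?_
  rw [ZMod.card, card_field, mul_right_comm]
  exact mul_pow_sub_one_div_dvd K_mul_dvd t a
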